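/- arXiv:2507.22178 — 3 statements merged into one kernel-verified Lean document; each statement's English description precedes it below -/
import Mathlib

section
/- Let c > 0, let ξ satisfy 0 < ξ < 1/c, and let Λ : ℕ → ℝ satisfy 0 ≤ Λ(2) ≤ Λ(j) for all j ≥ 2. Assume that the sum Σ_{j ≥ 2} (c·ξ)^{Λ(j)} is finite. Then there exists a constant γ₂ ≥ 0 such that for all ε ∈ (0, ξ], Σ_{j ≥ 2} (c·ε)^{Λ(j)} = Σ_{j ≥ 2} ε^{Λ(j)} · c^{Λ(j)} ≤ γ₂ · ε^{Λ(2)}. -/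
open scoped ENNReal

/-! Write `ε = ξ q` with `q ∈ (0, 1]`. Every exponent is at least `m`, so `q ^ Λ i ≤ q ^ m`, and the
series at `ε` is at most `q ^ m` times the series at `ξ`. -/

lemma mul_rpow_le_rpow_mul_rpow_of_exponent_ge {a q s m : ℝ} (ha : 0 ≤ a) (hq : 0 < q)
    (hq1 : q ≤ 1) (hms : m ≤ s) : (a * q) ^ s ≤ a ^ s * q ^ m := by
  rw [Real.mul_rpow ha hq.le]
  exact mul_le_mul_of_nonneg_left (Real.rpow_le_rpow_of_exponent_ge hq hq1 hms)
    (Real.rpow_nonneg ha s)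

lemma tsum_ofReal_mul_rpow_le {ι : Type*} {a q m : ℝ} {Λ : ι → ℝ} (ha : 0 ≤ a) (hq : 0 < q)
    (hq1 : q ≤ 1) (hΛ : ∀ i, m ≤ Λ i) :
    ∑' i, ENNReal.ofReal ((a * q) ^ Λ i) ≤
      (∑' i, ENNReal.ofReal (a ^ Λ i)) * ENNReal.ofReal (q ^ m) := by
  rw [← ENNReal.tsum_mul_right]
  refine ENNReal.tsum_le_tsum fun i => ?_
  rw [← ENNReal.ofReal_mul (Real.rpow_nonneg ha _)]
  exact ENNReal.ofReal_le_ofReal (mul_rpow_le_rpow_mul_rpow_of_exponent_ge ha hq hq1 (hΛ i))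

theorem stmt6_general {ι : Type*} {c ξ m : ℝ} {Λ : ι → ℝ} (hc : 0 < c) (hξ : 0 < ξ)
    (hΛ : ∀ i, m ≤ Λ i) (hsum : ∑' i, ENNReal.ofReal ((c * ξ) ^ Λ i) ≠ ⊤) :
    ∃ γ : ℝ, 0 ≤ γ ∧ ∀ ε : ℝ, ε ∈ Set.Ioc 0 ξ →
      ∑' i, ENNReal.ofReal ((c * ε) ^ Λ i) = ∑' i, ENNReal.ofReal (ε ^ Λ i * c ^ Λ i) ∧
      ∑' i, ENNReal.ofReal ((c * ε) ^ Λ i) ≤ ENNReal.ofReal (γ * ε ^ m) := by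
  set S := ∑' i, ENNReal.ofReal ((c * ξ) ^ Λ i)
  refine ⟨S.toReal / ξ ^ m, by positivity, fun ε ⟨hε, hεξ⟩ => ⟨?_, ?_⟩⟩
  · simp only [mul_comm c, Real.mul_rpow hε.le hc.le]
  · have hscale : c * ε = c * ξ * (ε / ξ) := by field_simp
    calc ∑' i, ENNReal.ofReal ((c * ε) ^ Λ i)
        ≤ S * ENNReal.ofReal ((ε / ξ) ^ m) := by
          rw [hscale]
          exact tsum_ofReal_mul_rpow_le (mul_pos hc hξ).le (div_pos hε hξ)
            ((div_le_one hξ).2 hεξ) hΛ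
      _ = ENNReal.ofReal (S.toReal * (ε / ξ) ^ m) := by
          rw [ENNReal.ofReal_mul ENNReal.toReal_nonneg, ENNReal.ofReal_toReal hsum]
      _ = ENNReal.ofReal (S.toReal / ξ ^ m * ε ^ m) := by
          rw [Real.div_rpow hε.le hξ.le, mul_div_left_comm, mul_comm]

/-- If `Λ(2) ≤ Λ(j)` for `j ≥ 2`, `0 ≤ Λ(2)`, and `Σ_{j≥2} (cξ)^{Λ(j)}` is finite for
some `ξ < 1/c`, then for all `ε ∈ (0, ξ]`,
`Σ_{j≥2} (cε)^{Λ(j)} = Σ_{j≥2} ε^{Λ(j)} c^{Λ(j)} ≤ γ₂ ε^{Λ(2)}`. -/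
theorem stmt6 (c ξ : ℝ) (hc : 0 < c) (hξ : 0 < ξ) (hξc : ξ < 1 / c)
    (Λ : ℕ → ℝ) (hΛ0 : 0 ≤ Λ 2) (hΛ : ∀ j : ℕ, 2 ≤ j → Λ 2 ≤ Λ j)
    (hsum : (∑' j : {j : ℕ // 2 ≤ j}, ENNReal.ofReal ((c * ξ) ^ Λ j.1)) ≠ ⊤) :
    ∃ γ₂ : ℝ, 0 ≤ γ₂ ∧ ∀ ε : ℝ, ε ∈ Set.Ioc 0 ξ →
      (∑' j : {j : ℕ // 2 ≤ j}, ENNReal.ofReal ((c * ε) ^ Λ j.1)) =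
        (∑' j : {j : ℕ // 2 ≤ j}, ENNReal.ofReal (ε ^ Λ j.1 * c ^ Λ j.1)) ∧
      (∑' j : {j : ℕ // 2 ≤ j}, ENNReal.ofReal ((c * ε) ^ Λ j.1)) ≤
        ENNReal.ofReal (γ₂ * ε ^ Λ 2) :=
  stmt6_general hc hξ (fun j => hΛ j.1 j.2) hsum
end

section
/- Let λ ∈ ℝ, let m ≥ 1 be an integer, and define h : ℂ ∖ (−∞, 0] → ℝ by h(z) := Re(z^λ) (principal complex power). Then for every z ∈ ℂ ∖ (−∞, 0], h is m times differentiable at z and the operator norm of its m-th Fréchet derivative, viewed as an ℝ-multilinear map on ℂ ≅ ℝ², equals ‖D^m h(z)‖ = (∏_{k=0}^{m−1} |λ − k|) · ‖z‖^{λ − m}. -/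
/-!
The real part of a complex multilinear form `M` in at least one argument has the same operator norm
as `M`: multiplying one argument by a suitable unimodular scalar makes the value of `M` real and
nonnegative without changing the norms of the arguments. For a holomorphic function `f` of one
variable, the `m`-th real Fréchet derivative of `Re ∘ f` is the real part of the complex one, so for
`m ≥ 1` its norm is `|f⁽ᵐ⁾|`. It remains to differentiate `z ^ a` repeatedly.
-/

section RealPart

variable {𝕜 : Type*} [RCLike 𝕜]

theorem norm_reCLM_compContinuousMultilinearMap_restrictScalars {ι : Type*} [Fintype ι] [Nonempty ι]
    {E : ι → Type*} [∀ i, SeminormedAddCommGroup (E i)] [∀ i, NormedSpace 𝕜 (E i)]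
    [∀ i, NormedSpace ℝ (E i)] [∀ i, IsScalarTower ℝ 𝕜 (E i)]
    (M : ContinuousMultilinearMap 𝕜 E 𝕜) :
    ‖(RCLike.reCLM : StrongDual ℝ 𝕜).compContinuousMultilinearMap (M.restrictScalars ℝ)‖ = ‖M‖ := by
  classical
  set R := (RCLike.reCLM : StrongDual ℝ 𝕜).compContinuousMultilinearMap (M.restrictScalars ℝ)
  apply le_antisymm
  · simpa only [RCLike.reCLM_norm, one_mul, ContinuousMultilinearMap.norm_restrictScalars] using
      (RCLike.reCLM : StrongDual ℝ 𝕜).norm_compContinuousMultilinearMap_le (M.restrictScalars ℝ)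
  · refine M.opNorm_le_bound (norm_nonneg R) fun v => ?_
    obtain ⟨c, hc, hcM⟩ := RCLike.exists_norm_eq_mul_self (M v)
    let i : ι := Classical.arbitrary ι
    let w := Function.update v i (c • v i)
    have hMw : M w = (‖M v‖ : 𝕜) := by
      rw [M.map_update_smul, Function.update_eq_self, smul_eq_mul, hcM]
    have hw : ∀ j, ‖w j‖ = ‖v j‖ := by
      intro j
      rcases eq_or_ne j i with rfl | hj
      · simp only [w, Function.update_self, norm_smul, hc, one_mul]
      · simp only [w, Function.update_of_ne hj]
    calc ‖M v‖ = RCLike.re (M w) := by rw [hMw, RCLike.ofReal_re]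
      _ ≤ ‖R w‖ := le_abs_self _
      _ ≤ ‖R‖ * ∏ j, ‖w j‖ := R.le_opNorm w
      _ = ‖R‖ * ∏ j, ‖v j‖ := by simp only [hw]

variable {E : Type*} [NormedAddCommGroup E] [NormedSpace 𝕜 E] [NormedSpace ℝ E]
  [IsScalarTower ℝ 𝕜 E]

theorem norm_iteratedFDeriv_re {f : E → 𝕜} {x : E} {m : ℕ} (hm : m ≠ 0) (hf : ContDiffAt 𝕜 m f x) :
    ‖iteratedFDeriv ℝ m (fun y => RCLike.re (f y)) x‖ = ‖iteratedFDeriv 𝕜 m f x‖ := by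
  have : NeZero m := ⟨hm⟩
  have hre : iteratedFDeriv ℝ m (fun y => RCLike.re (f y)) x =
      (RCLike.reCLM : StrongDual ℝ 𝕜).compContinuousMultilinearMap (iteratedFDeriv ℝ m f x) :=
    (RCLike.reCLM : StrongDual ℝ 𝕜).iteratedFDeriv_comp_left (hf.restrict_scalars ℝ) le_rfl
  rw [hre, ← hf.restrictScalars_iteratedFDeriv]
  exact norm_reCLM_compContinuousMultilinearMap_restrictScalars _

end RealPart

theorem contDiffAt_cpow_const {a z : ℂ} {n : WithTop ℕ∞} (hz : z ∈ Complex.slitPlane) :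
    ContDiffAt ℂ n (fun w : ℂ => w ^ a) z :=
  (analyticAt_id.cpow analyticAt_const hz).contDiffAt

theorem iteratedDeriv_cpow_const (a : ℂ) (m : ℕ) {z : ℂ} (hz : z ∈ Complex.slitPlane) :
    iteratedDeriv m (fun w : ℂ => w ^ a) z =
      (∏ k ∈ Finset.range m, (a - k)) * z ^ (a - m) := by
  induction m generalizing z with
  | zero => simp
  | succ m ih =>
    have ih_near : iteratedDeriv m (fun w : ℂ => w ^ a) =ᶠ[nhds z]
        fun w => (∏ k ∈ Finset.range m, (a - k)) * w ^ (a - m) :=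
      Filter.eventually_of_mem (Complex.isOpen_slitPlane.mem_nhds hz) fun _ hw => ih hw
    rw [iteratedDeriv_succ, ih_near.deriv_eq, deriv_const_mul_field, Complex.deriv_cpow_const hz,
      Finset.prod_range_succ, Nat.cast_succ, sub_sub, mul_assoc]

theorem stmt8_general (a : ℂ) {m : ℕ} (hm : m ≠ 0) {z : ℂ} (hz : z ∈ Complex.slitPlane) :
    ContDiffAt ℝ m (fun w : ℂ => (w ^ a).re) z ∧
      ‖iteratedFDeriv ℝ m (fun w : ℂ => (w ^ a).re) z‖ =
        (∏ k ∈ Finset.range m, ‖a - k‖) * ‖z ^ (a - m)‖ := by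
  have hf : ContDiffAt ℂ m (fun w : ℂ => w ^ a) z := contDiffAt_cpow_const hz
  refine ⟨Complex.reCLM.contDiff.contDiffAt.comp z (hf.restrict_scalars ℝ), ?_⟩
  calc ‖iteratedFDeriv ℝ m (fun w : ℂ => (w ^ a).re) z‖
      = ‖iteratedFDeriv ℂ m (fun w : ℂ => w ^ a) z‖ :=
        norm_iteratedFDeriv_re (𝕜 := ℂ) hm hf
    _ = ‖iteratedDeriv m (fun w : ℂ => w ^ a) z‖ := norm_iteratedFDeriv_eq_norm_iteratedDeriv
    _ = (∏ k ∈ Finset.range m, ‖a - k‖) * ‖z ^ (a - m)‖ := by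
      rw [iteratedDeriv_cpow_const a m hz, norm_mul, norm_prod]

/-- The norm of the `m`-th Fréchet derivative of `z ↦ Re(z^λ)` on the slit plane:
`‖D^m h(z)‖ = (∏_{k=0}^{m−1} |λ − k|) ‖z‖^{λ−m}`. -/
theorem stmt8 (lam : ℝ) (m : ℕ) (hm : 1 ≤ m) (z : ℂ) (hz : z ∈ Complex.slitPlane) :
    ContDiffAt ℝ m (fun w : ℂ => (w ^ (lam : ℂ)).re) z ∧
      ‖iteratedFDeriv ℝ m (fun w : ℂ => (w ^ (lam : ℂ)).re) z‖ =
        (∏ k ∈ Finset.range m, |lam - (k : ℝ)|) * ‖z‖ ^ (lam - m) := by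
  simpa only [← Complex.ofReal_natCast, ← Complex.ofReal_sub, Complex.norm_real, Real.norm_eq_abs,
    Complex.norm_cpow_real] using stmt8_general lam (Nat.one_le_iff_ne_zero.mp hm) hz
end

section
/- Let ω ∈ (0, 2π), let λ > 0 be a real number that is not an integer, let m ≥ 1 be an integer and p ∈ [1, ∞). Define h : ℂ ∖ (−∞, 0] → ℝ by h(z) := Re(z^λ) (principal complex power). Then the function z ↦ ‖D^m h(z)‖^p is Lebesgue-integrable on S_ω ∩ B(0, 1) (the intersection of the sector with the open unit disc) if and only if (λ − m)·p + 2 > 0, i.e. if and only if λ > m − 2/p. -/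
open Real MeasureTheory

/-! Since `h` is the real part of the holomorphic function `z ^ λ`, its `m`-th real derivative is
`v ↦ Re (a * ∏ i, v i)` with `a` the `m`-th complex derivative, and for `m ≥ 1` a rotation of one
of the `v i` removes the real part: `‖D^m h(z)‖ = ‖a‖ = c * ‖z‖ ^ (λ - m)` with
`c = |λ (λ - 1) ⋯ (λ - m + 1)|`. This is radial, and a cone meets `B(0, r)` in a fixed proportion
of the ball, so that integrability over the sector is integrability over the whole disc. -/

open scoped Pointwise

section Cone

variable {E : Type*} [NormedAddCommGroup E] [NormedSpace ℝ E] [FiniteDimensional ℝ E]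
  [MeasurableSpace E] [BorelSpace E] (μ : Measure E) [μ.IsAddHaarMeasure] {C : Set E}

theorem addHaar_cone_inter_ball (hC : ∀ r : ℝ, 0 < r → r • C = C) {r : ℝ} (hr : 0 < r) :
    μ (C ∩ Metric.ball 0 r) =
      ENNReal.ofReal (r ^ Module.finrank ℝ E) * μ (C ∩ Metric.ball 0 1) := by
  rw [← Measure.addHaar_smul_of_nonneg μ hr.le, Set.smul_set_inter₀ hr.ne', hC r hr,
    smul_unitBall_of_pos hr]

theorem map_norm_restrict_cone (hC : ∀ r : ℝ, 0 < r → r • C = C) :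
    (μ.restrict C).map (‖·‖) =
      (μ (C ∩ Metric.ball 0 1) / μ (Metric.ball 0 1)) • μ.map (‖·‖) := by
  have restrict_Iio (r : ℝ) : (μ.restrict C).map (‖·‖) (Set.Iio r) = μ (C ∩ Metric.ball 0 r) := by
    rw [Measure.map_apply measurable_norm measurableSet_Iio,
      Measure.restrict_apply (measurable_norm measurableSet_Iio), Set.inter_comm, ball_zero_eq]
    rfl
  have map_Iio (r : ℝ) : μ.map (‖·‖) (Set.Iio r) = μ (Metric.ball 0 r) := by
    rw [Measure.map_apply measurable_norm measurableSet_Iio, ball_zero_eq]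
    rfl
  refine Measure.ext_of_generateFrom_of_iUnion (Set.range Set.Iio) (fun n : ℕ ↦ Set.Iio (n : ℝ))
    (BorelSpace.measurable_eq.trans (borel_eq_generateFrom_Iio ℝ)) isPiSystem_Iio
    (Set.iUnion_eq_univ_iff.2 exists_nat_gt) (fun n ↦ Set.mem_range_self _) (fun n ↦ ?_) ?_
  · rw [restrict_Iio]
    exact measure_ne_top_of_subset Set.inter_subset_right measure_ball_lt_top.ne
  · rintro _ ⟨r, rfl⟩
    rw [Measure.smul_apply, restrict_Iio, map_Iio]
    rcases le_or_gt r 0 with hr | hr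
    · simp [Metric.ball_eq_empty.2 hr]
    · rw [addHaar_cone_inter_ball μ hC hr, Measure.addHaar_ball_of_pos μ 0 hr, smul_eq_mul,
        mul_left_comm, ENNReal.div_mul_cancel (Metric.measure_ball_pos μ 0 one_pos).ne'
          measure_ball_lt_top.ne]

variable {F : Type*} [NormedAddCommGroup F]

theorem integrableOn_cone_fun_norm_iff (hC : ∀ r : ℝ, 0 < r → r • C = C) (hμC : μ C ≠ 0)
    {f : ℝ → F} (hf : StronglyMeasurable f) :
    IntegrableOn (fun x ↦ f ‖x‖) C μ ↔ Integrable (fun x ↦ f ‖x‖) μ := by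
  set c := μ (C ∩ Metric.ball 0 1) / μ (Metric.ball 0 1)
  have hmap : (μ.restrict C).map (‖·‖) = c • μ.map (‖·‖) := map_norm_restrict_cone μ hC
  have hc_ne_zero : c ≠ 0 := by
    intro hc
    rw [hc, zero_smul, Measure.map_eq_zero_iff measurable_norm.aemeasurable,
      Measure.restrict_eq_zero] at hmap
    exact hμC hmap
  have hc_ne_top : c ≠ ⊤ := ENNReal.div_ne_top
    (measure_ne_top_of_subset Set.inter_subset_right measure_ball_lt_top.ne)
    (Metric.measure_ball_pos μ 0 one_pos).ne'
  calc IntegrableOn (fun x ↦ f ‖x‖) C μ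
    _ ↔ Integrable f ((μ.restrict C).map (‖·‖)) :=
      (integrable_map_measure hf.aestronglyMeasurable measurable_norm.aemeasurable).symm
    _ ↔ Integrable f (μ.map (‖·‖)) := by rw [hmap, integrable_smul_measure hc_ne_zero hc_ne_top]
    _ ↔ Integrable (fun x ↦ f ‖x‖) μ :=
      integrable_map_measure hf.aestronglyMeasurable measurable_norm.aemeasurable

theorem integrableOn_cone_inter_ball_fun_norm_iff (hC : ∀ r : ℝ, 0 < r → r • C = C)
    (hμC : μ C ≠ 0) {f : ℝ → F} (hf : StronglyMeasurable f) (R : ℝ) :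
    IntegrableOn (fun x ↦ f ‖x‖) (C ∩ Metric.ball 0 R) μ ↔
      IntegrableOn (fun x ↦ f ‖x‖) (Metric.ball 0 R) μ := by
  have hindicator : (Metric.ball 0 R).indicator (fun x : E ↦ f ‖x‖) =
      fun x ↦ (Set.Iio R).indicator f ‖x‖ := by
    ext x
    simp [Set.indicator]
  rw [Set.inter_comm, ← integrableOn_indicator_iff Metric.isOpen_ball.measurableSet,
    ← integrable_indicator_iff Metric.isOpen_ball.measurableSet, hindicator]
  exact integrableOn_cone_fun_norm_iff μ hC hμC (hf.indicator measurableSet_Iio)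

theorem integrableOn_ball_norm_rpow_iff [Nontrivial E] {R : ℝ} (hR : 0 < R) (s : ℝ) :
    IntegrableOn (fun x : E ↦ ‖x‖ ^ s) (Metric.ball 0 R) μ ↔ 0 < s + Module.finrank ℝ E := by
  have hdim : ((Module.finrank ℝ E - 1 : ℕ) : ℝ) = Module.finrank ℝ E - 1 :=
    Nat.cast_pred Module.finrank_pos
  have hpow : Set.EqOn (fun r : ℝ ↦ r ^ (Module.finrank ℝ E - 1) • r ^ s)
      (fun r ↦ r ^ (s + Module.finrank ℝ E - 1)) (Set.Ioo 0 R) := by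
    rintro r ⟨hr, -⟩
    dsimp only
    rw [smul_eq_mul, ← rpow_natCast, ← rpow_add hr, hdim]
    ring_nf
  rw [integrableOn_fun_norm_addHaar μ (f := fun r : ℝ ↦ r ^ s),
    integrableOn_congr_fun hpow measurableSet_Ioo,
    intervalIntegral.integrableOn_Ioo_rpow_iff hR, neg_lt_sub_iff_lt_add, lt_add_iff_pos_right]

end Cone

/-- The open planar sector `S_ω` of opening `ω`, bisected by the positive real axis. Only
`ω ≤ 2π` is meaningful, as `Complex.arg` takes values in `(-π, π]`. -/
def planarSector (ω : ℝ) : Set ℂ := {z | z ≠ 0 ∧ |z.arg| < ω / 2}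

namespace planarSector

variable {ω : ℝ}

theorem subset_slitPlane (hω : ω ≤ 2 * π) : planarSector ω ⊆ Complex.slitPlane := by
  rintro z ⟨hz, harg⟩
  refine Complex.mem_slitPlane_iff_arg.2 ⟨fun hπ ↦ ?_, hz⟩
  rw [hπ, abs_of_pos pi_pos] at harg
  linarith

theorem isOpen (hω : ω ≤ 2 * π) : IsOpen (planarSector ω) := by
  have hcont : ContinuousOn (fun z : ℂ ↦ |z.arg|) Complex.slitPlane :=
    fun z hz ↦ (Complex.continuousAt_arg hz).abs.continuousWithinAt
  have heq : planarSector ω = Complex.slitPlane ∩ (fun z : ℂ ↦ |z.arg|) ⁻¹' Set.Iio (ω / 2) :=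
    Set.Subset.antisymm (fun z hz ↦ ⟨subset_slitPlane hω hz, hz.2⟩)
      fun z hz ↦ ⟨Complex.slitPlane_ne_zero hz.1, hz.2⟩
  exact heq ▸ hcont.isOpen_inter_preimage Complex.isOpen_slitPlane isOpen_Iio

theorem smul_eq {r : ℝ} (hr : 0 < r) : r • planarSector ω = planarSector ω := by
  ext z
  simp only [Set.mem_smul_set_iff_inv_smul_mem₀ hr.ne', planarSector, Set.mem_ofPred_eq,
    Complex.real_smul, Complex.arg_real_mul z (inv_pos.2 hr), ne_eq, mul_eq_zero,
    Complex.ofReal_eq_zero, inv_eq_zero, hr.ne', false_or]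

theorem volume_ne_zero (hω : ω ∈ Set.Ioc 0 (2 * π)) : volume (planarSector ω) ≠ 0 :=
  (isOpen hω.2).measure_ne_zero volume ⟨1, one_ne_zero, by simpa using hω.1⟩

theorem integrableOn_inter_ball_norm_rpow_iff (hω : ω ∈ Set.Ioc 0 (2 * π)) {R : ℝ} (hR : 0 < R)
    (s : ℝ) :
    IntegrableOn (fun z : ℂ ↦ ‖z‖ ^ s) (planarSector ω ∩ Metric.ball 0 R) ↔ 0 < s + 2 := by
  have hmeas : StronglyMeasurable fun r : ℝ ↦ r ^ s :=
    (measurable_id.pow_const s).stronglyMeasurable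
  rw [integrableOn_cone_inter_ball_fun_norm_iff volume (fun _ ↦ smul_eq) (volume_ne_zero hω) hmeas,
    integrableOn_ball_norm_rpow_iff volume hR, Complex.finrank_real_complex, Nat.cast_ofNat]

end planarSector

section ComplexDerivatives

variable {f : ℂ → ℂ} {z : ℂ} {m : ℕ}

theorem iteratedFDeriv_re_apply (hf : ContDiffAt ℂ m f z) (v : Fin m → ℂ) :
    iteratedFDeriv ℝ m (fun w ↦ (f w).re) z v = (iteratedDeriv m f z * ∏ i, v i).re := by
  have hre : iteratedFDeriv ℝ m (Complex.reCLM ∘ f) z =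
      Complex.reCLM.compContinuousMultilinearMap (iteratedFDeriv ℝ m f z) :=
    Complex.reCLM.iteratedFDeriv_comp_left (hf.restrict_scalars ℝ) le_rfl
  have hcomplex : iteratedFDeriv ℝ m f z v = iteratedFDeriv ℂ m f z v := by
    rw [← hf.restrictScalars_iteratedFDeriv (𝕜 := ℝ)]
    rfl
  calc iteratedFDeriv ℝ m (Complex.reCLM ∘ f) z v
    _ = (iteratedFDeriv ℝ m f z v).re := by rw [hre]; rfl
    _ = (iteratedDeriv m f z * ∏ i, v i).re := by
      rw [hcomplex, iteratedFDeriv_apply_eq_iteratedDeriv_mul_prod, smul_eq_mul, mul_comm]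

theorem norm_iteratedFDeriv_re_s9 (hf : ContDiffAt ℂ m f z) (hm : m ≠ 0) :
    ‖iteratedFDeriv ℝ m (fun w ↦ (f w).re) z‖ = ‖iteratedDeriv m f z‖ := by
  set a := iteratedDeriv m f z with ha
  apply le_antisymm
  · refine ContinuousMultilinearMap.opNorm_le_bound (norm_nonneg a) fun v ↦ ?_
    calc ‖iteratedFDeriv ℝ m (fun w ↦ (f w).re) z v‖
      _ = |(a * ∏ i, v i).re| := by rw [iteratedFDeriv_re_apply hf, norm_eq_abs]
      _ ≤ ‖a * ∏ i, v i‖ := Complex.abs_re_le_norm _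
      _ = ‖a‖ * ∏ i, ‖v i‖ := by rw [norm_mul, norm_prod]
  · rcases eq_or_ne a 0 with ha0 | ha0
    · simp [ha0]
    obtain ⟨k, rfl⟩ := Nat.exists_eq_succ_of_ne_zero hm
    let v : Fin (k + 1) → ℂ := Fin.cons (‖a‖ / a) fun _ ↦ 1
    have hv : ∏ i, v i = ‖a‖ / a := by simp [v, Fin.prod_univ_succ]
    have hv_norm : ∏ i, ‖v i‖ = 1 := by
      rw [← norm_prod, hv, norm_div, Complex.norm_real, norm_norm,
        div_self (norm_ne_zero_iff.2 ha0)]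
    have hle := (iteratedFDeriv ℝ (k + 1) (fun w ↦ (f w).re) z).le_opNorm v
    rwa [iteratedFDeriv_re_apply hf, ← ha, hv, mul_div_cancel₀ _ ha0, Complex.ofReal_re, norm_norm,
      hv_norm, mul_one] at hle

theorem iteratedDeriv_cpow_const_s9 (c : ℂ) (n : ℕ) (hz : z ∈ Complex.slitPlane) :
    iteratedDeriv n (fun w : ℂ ↦ w ^ c) z = (descPochhammer ℂ n).eval c * z ^ (c - n) := by
  induction n generalizing z with
  | zero => simp
  | succ n ih =>
    have hnear : iteratedDeriv n (fun w : ℂ ↦ w ^ c) =ᶠ[nhds z]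
        fun w ↦ (descPochhammer ℂ n).eval c * w ^ (c - n) :=
      Filter.eventually_of_mem (Complex.isOpen_slitPlane.mem_nhds hz) fun w hw ↦ ih hw
    have hderiv : HasDerivAt (fun w : ℂ ↦ w ^ (c - n)) ((c - n) * z ^ (c - n - 1) * 1) z :=
      (hasDerivAt_id z).cpow_const hz
    rw [iteratedDeriv_succ, hnear.deriv_eq, (hderiv.const_mul _).deriv, mul_one, ← mul_assoc,
      ← descPochhammer_succ_eval, Nat.cast_succ, sub_sub]

theorem norm_iteratedFDeriv_re_cpow_const (lam : ℝ) (hm : m ≠ 0) (hz : z ∈ Complex.slitPlane) :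
    ‖iteratedFDeriv ℝ m (fun w : ℂ ↦ (w ^ (lam : ℂ)).re) z‖ =
      ‖(descPochhammer ℂ m).eval (lam : ℂ)‖ * ‖z‖ ^ (lam - m) := by
  have hanalytic : AnalyticAt ℂ (fun w : ℂ ↦ w ^ (lam : ℂ)) z :=
    analyticAt_id.cpow analyticAt_const hz
  rw [norm_iteratedFDeriv_re_s9 hanalytic.contDiffAt hm, iteratedDeriv_cpow_const_s9 _ m hz, norm_mul,
    ← Complex.ofReal_natCast, ← Complex.ofReal_sub, Complex.norm_cpow_real]

end ComplexDerivatives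

theorem stmt9_general {ω : ℝ} (hω : ω ∈ Set.Ioc 0 (2 * π)) {R : ℝ} (hR : 0 < R) {m : ℕ}
    (hm : m ≠ 0) {lam : ℝ} (hlam : ∀ k < m, lam ≠ k) (p : ℝ) :
    IntegrableOn (fun z : ℂ ↦ ‖iteratedFDeriv ℝ m (fun w : ℂ ↦ (w ^ (lam : ℂ)).re) z‖ ^ p)
      (planarSector ω ∩ Metric.ball 0 R) ↔ 0 < (lam - m) * p + 2 := by
  set c := ‖(descPochhammer ℂ m).eval (lam : ℂ)‖
  have hc : 0 < c := by
    rw [norm_pos_iff, descPochhammer_eval_eq_prod_range, Finset.prod_ne_zero_iff]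
    intro k hk
    exact_mod_cast sub_ne_zero.2 (hlam k (Finset.mem_range.1 hk))
  have hradial : Set.EqOn
      (fun z : ℂ ↦ ‖iteratedFDeriv ℝ m (fun w : ℂ ↦ (w ^ (lam : ℂ)).re) z‖ ^ p)
      (fun z ↦ c ^ p * ‖z‖ ^ ((lam - m) * p)) (planarSector ω ∩ Metric.ball 0 R) := by
    rintro z ⟨hz, -⟩
    dsimp only
    rw [norm_iteratedFDeriv_re_cpow_const lam hm (planarSector.subset_slitPlane hω.2 hz),
      mul_rpow hc.le (rpow_nonneg (norm_nonneg z) _), ← rpow_mul (norm_nonneg z)]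
  rw [integrableOn_congr_fun hradial
      ((planarSector.isOpen hω.2).inter Metric.isOpen_ball).measurableSet,
    ← planarSector.integrableOn_inter_ball_norm_rpow_iff hω hR]
  exact integrable_const_mul_iff (rpow_pos_of_pos hc p).ne'.isUnit _

/-- `W^{m,p}` membership criterion near the corner: for `λ > 0` non-integer,
`‖D^m Re(z^λ)‖^p` is integrable on `S_ω ∩ B(0,1)` iff `(λ − m)p + 2 > 0`. -/
theorem stmt9 (ω : ℝ) (hω : ω ∈ Set.Ioo 0 (2 * π))
    (lam : ℝ) (hlam : 0 < lam) (hlam' : ∀ k : ℤ, lam ≠ (k : ℝ))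
    (m : ℕ) (hm : 1 ≤ m) (p : ℝ) (hp : 1 ≤ p) :
    IntegrableOn
        (fun z : ℂ => ‖iteratedFDeriv ℝ m (fun w : ℂ => (w ^ (lam : ℂ)).re) z‖ ^ p)
        ({z : ℂ | z ≠ 0 ∧ |z.arg| < ω / 2} ∩ Metric.ball 0 1) volume ↔
      0 < (lam - m) * p + 2 := by
  exact stmt9_general (Set.Ioo_subset_Ioc_self hω) one_pos (Nat.one_le_iff_ne_zero.1 hm)
    (fun k _ ↦ mod_cast hlam' k) p
end
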